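/- arXiv:1805.09518 — 2 statements merged into one kernel-verified Lean document; each statement's English description precedes it below -/
import Mathlib

section
/- The ordered Ramsey number of the ordered diamond graph K₄ − e with vertex set {1,2,3,4} and all edges of K₄ except {2,4} equals 14: every 2-coloring of the edges of the complete graph on {1,...,14} contains a monochromatic ordered copy of this graph, and there is a 2-coloring of the edges of the complete graph on {1,...,13} containing no such copy. -/
/-- A 2-coloring `c` of the edges of the complete graph on the ordered vertex set
`{1,…,N}` contains an ordered copy, in color `b`, of the ordered graph with vertex
set `{1,…,n}` and edge set `E` (edges listed as pairs `(i, j)` with `i < j`):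
there is a strictly increasing map `φ : {1,…,n} → {1,…,N}` such that every edge
`(i, j) ∈ E` has `(φ i, φ j)` colored `b`. -/
def ContainsOrderedCopy (n N : ℕ) (E : Finset (ℕ × ℕ)) (c : ℕ → ℕ → Bool) (b : Bool) :
    Prop :=
  ∃ φ : ℕ → ℕ,
    (∀ i, 1 ≤ i → i ≤ n → 1 ≤ φ i ∧ φ i ≤ N) ∧
    (∀ i j, 1 ≤ i → i < j → j ≤ n → φ i < φ j) ∧
    (∀ e ∈ E, c (φ e.1) (φ e.2) = b)

/-- A 2-coloring `c` of the edges of the complete graph on `{1,…,N}` contains a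
monochromatic ordered copy of the ordered graph with vertex set `{1,…,n}` and
edge set `E`. -/
def ContainsMonoOrderedCopy (n N : ℕ) (E : Finset (ℕ × ℕ)) (c : ℕ → ℕ → Bool) : Prop :=
  ∃ b : Bool, ContainsOrderedCopy n N E c b

def diamondRows : List ℕ := [0, 10332, 12960, 11968, 11584, 12736, 5120, 3328, 3072, 15360, 4096, 4096, 0, 0]

def diamondCol (i j : ℕ) : Bool := (diamondRows.getD i 0).testBit j

def Bad (c : ℕ → ℕ → Bool) (N : ℕ) : Prop := ∃ b p q r s, 1 ≤ p ∧ p < q ∧ q < r ∧ r < s ∧ s ≤ N ∧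
  c p q = b ∧ c p r = b ∧ c p s = b ∧ c q r = b ∧ c r s = b

theorem bad_iff (c : ℕ → ℕ → Bool) (N : ℕ) :
    ContainsMonoOrderedCopy 4 N {(1, 2), (1, 3), (1, 4), (2, 3), (3, 4)} c ↔ Bad c N := by
  constructor
  · rintro ⟨b, φ, h1, h2, h3⟩
    simp only [Finset.mem_insert, Finset.mem_singleton, forall_eq_or_imp, forall_eq] at h3
    exact ⟨b, φ 1, φ 2, φ 3, φ 4, (h1 1 (by omega) (by omega)).1, h2 1 2 (by omega) (by omega) (by omega),
      h2 2 3 (by omega) (by omega) (by omega), h2 3 4 (by omega) (by omega) (by omega),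
      (h1 4 (by omega) (by omega)).2, h3⟩
  · rintro ⟨b, p, q, r, s, h1, h2, h3, h4, h5, h6⟩
    refine ⟨b, fun i => if i ≤ 1 then p else if i = 2 then q else if i = 3 then r else s, ?_, ?_, ?_⟩
    · intro i hi hi'
      interval_cases i <;> simp <;> omega
    · intro i j hi hij hj
      interval_cases j <;> interval_cases i <;> simp <;> omega
    · simpa using h6

set_option synthInstance.maxSize 4096 in
set_option synthInstance.maxHeartbeats 400000 in
theorem diamond_lower : ¬ Bad diamondCol 13 := by
  have key : ∀ s < 14, ∀ r < s, ∀ q < r, ∀ p < q, 1 ≤ p →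
      ¬ (diamondCol p q = diamondCol p r ∧ diamondCol p r = diamondCol p s ∧
        diamondCol p s = diamondCol q r ∧ diamondCol q r = diamondCol r s) := by
    decide +kernel
  rintro ⟨b, p, q, r, s, h1, h2, h3, h4, h5, e1, e2, e3, e4, e5⟩
  exact key s (by omega) r h4 q h3 p h2 h1 (by rw [e1, e2, e3, e4, e5]; simp)

/-- four vertices pairwise in the same colour contain the diamond. -/
theorem bad_of_clique (c : ℕ → ℕ → Bool) (N : ℕ) (b : Bool) (t : Finset ℕ) (ht : 4 ≤ t.card)
    (hr : ∀ x ∈ t, 1 ≤ x ∧ x ≤ N) (hc : ∀ x ∈ t, ∀ y ∈ t, x < y → c x y = b) : Bad c N := by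
  obtain ⟨u, hu, hu4⟩ := Finset.exists_subset_card_eq ht
  let f := u.orderEmbOfFin hu4
  have hm : ∀ i, f i ∈ t := fun i => hu (u.orderEmbOfFin_mem hu4 i)
  have hl : ∀ i j : Fin 4, i < j → f i < f j := fun i j h => f.strictMono h
  have hcc : ∀ i j : Fin 4, i < j → c (f i) (f j) = b := fun i j h => hc _ (hm i) _ (hm j) (hl i j h)
  exact ⟨b, f 0, f 1, f 2, f 3, (hr _ (hm 0)).1, hl _ _ (by decide), hl _ _ (by decide),
    hl _ _ (by decide), (hr _ (hm 3)).2, hcc _ _ (by decide), hcc _ _ (by decide),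
    hcc _ _ (by decide), hcc _ _ (by decide), hcc _ _ (by decide)⟩

theorem bad_of_nbhd (c : ℕ → ℕ → Bool) (N : ℕ) (b : Bool) (t : Finset ℕ) (ht : 7 ≤ t.card)
    (hr : ∀ x ∈ t, 2 ≤ x ∧ x ≤ N) (hc : ∀ x ∈ t, c 1 x = b) : Bad c N := by
  classical
  by_contra hbad
  let P : ℕ → Prop := fun x => ∃ w ∈ t, w < x ∧ c w x = b
  have hsum := Finset.card_filter_add_card_filter_not (s := t) P
  have hne : ∀ v : Bool, v ≠ b → v = !b := by intro v; cases v <;> cases b <;> simp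
  have hA : ¬ 4 ≤ (t.filter P).card := by
    intro h
    refine hbad (bad_of_clique c N (!b) _ h (fun x hx => ?_) (fun x hx y hy hxy => hne _ fun hb => ?_))
    · have := hr x (Finset.mem_filter.1 hx).1
      omega
    · obtain ⟨hxt, w, hw, hwx, hwc⟩ := Finset.mem_filter.1 hx
      have hyt := (Finset.mem_filter.1 hy).1
      exact hbad ⟨b, 1, w, x, y, le_rfl, (hr w hw).1, hwx, hxy, (hr y hyt).2, hc w hw, hc x hxt,
        hc y hyt, hwc, hb⟩
  have hB : ¬ 4 ≤ (t.filter (fun x => ¬ P x)).card := by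
    intro h
    refine hbad (bad_of_clique c N (!b) _ h (fun x hx => ?_) (fun x hx y hy hxy => hne _ fun hb => ?_))
    · have := hr x (Finset.mem_filter.1 hx).1
      omega
    · exact (Finset.mem_filter.1 hy).2 ⟨x, (Finset.mem_filter.1 hx).1, hxy, hb⟩
  omega

theorem diamond_upper (c : ℕ → ℕ → Bool) : Bad c 14 := by
  have hsum := Finset.card_filter_add_card_filter_not (s := Finset.Icc 2 14) (fun x => c 1 x = true)
  have hcard : (Finset.Icc 2 14).card = 13 := by simp
  by_cases h : 7 ≤ ((Finset.Icc 2 14).filter (fun x => c 1 x = true)).card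
  · exact bad_of_nbhd c 14 true _ h (fun x hx => Finset.mem_Icc.1 (Finset.mem_filter.1 hx).1)
      (fun x hx => (Finset.mem_filter.1 hx).2)
  · exact bad_of_nbhd c 14 false ((Finset.Icc 2 14).filter (fun x => ¬ c 1 x = true)) (by omega)
      (fun x hx => Finset.mem_Icc.1 (Finset.mem_filter.1 hx).1)
      (fun x hx => by simpa using (Finset.mem_filter.1 hx).2)

/-- The ordered Ramsey number of the diamond `K₄ - e` on vertex set `{1,2,3,4}` with
all edges of `K₄` except `(2, 4)` equals `14`: every 2-coloring of the edges
of the complete graph on `{1,…,14}` contains a monochromatic ordered copy, and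
some 2-coloring of the edges of the complete graph on `{1,…,13}` contains
none. -/
theorem orderedRamsey_diamond_missing_24_eq :
    (∀ c : ℕ → ℕ → Bool,
      ContainsMonoOrderedCopy 4 14 {(1, 2), (1, 3), (1, 4), (2, 3), (3, 4)} c) ∧
    (∃ c : ℕ → ℕ → Bool,
      ¬ ContainsMonoOrderedCopy 4 13 {(1, 2), (1, 3), (1, 4), (2, 3), (3, 4)} c) := by
  exact ⟨fun c => (bad_iff c 14).2 (diamond_upper c),
    diamondCol, fun h => diamond_lower ((bad_iff _ 13).1 h)⟩
end

section
/- The ordered Ramsey number of the ordered diamond graph K₄ − e with vertex set {1,2,3,4} and all edges of K₄ except {3,4} equals 12: every 2-coloring of the edges of the complete graph on {1,...,12} contains a monochromatic ordered copy of this graph, and there is a 2-coloring of the edges of the complete graph on {1,...,11} containing no such copy. -/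
def lowerColoring (i j : ℕ) : Bool :=
  (([0, 1564, 232, 1312, 2944, 2368, 2176, 3072, 3072, 3072, 2048, 0] : List ℕ).getD i 0).testBit j

set_option maxRecDepth 100000 in
set_option synthInstance.maxHeartbeats 400000 in
set_option synthInstance.maxSize 4000 in
theorem lowerColoring_check : ∀ p < 12, ∀ q < p, ∀ r < q, ∀ s < r, 1 ≤ s →
    ¬ (lowerColoring s r = lowerColoring s q ∧ lowerColoring s r = lowerColoring s p ∧
      lowerColoring s r = lowerColoring r q ∧ lowerColoring s r = lowerColoring r p) := by
  decide +kernel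

theorem six_step (c : ℕ → ℕ → Bool) (b : Bool) (v s1 s2 s3 s4 s5 s6 : ℕ)
    (H : ∀ b i j k l, v ≤ i → i < j → j < k → k < l → l ≤ 12 →
      c i j = b → c i k = b → c i l = b → c j k = b → c j l = b → False)
    (h0 : v < s1) (h1 : s1 < s2) (h2 : s2 < s3) (h3 : s3 < s4) (h4 : s4 < s5) (h5 : s5 < s6)
    (h6 : s6 ≤ 12) (e1 : c v s1 = b) (e2 : c v s2 = b) (e3 : c v s3 = b) (e4 : c v s4 = b)
    (e5 : c v s5 = b) (e6 : c v s6 = b) : False := by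
  have R : ∀ x y z, v < x → x < y → y < z → z ≤ 12 → c v x = b → c v y = b → c v z = b →
      c x y = b → c x z = b → False := fun x y z a1 a2 a3 a4 a5 a6 a7 a8 a9 =>
    H b v x y z le_rfl a1 a2 a3 a4 a5 a6 a7 a8 a9
  have B : ∀ x y z w, v < x → x < y → y < z → z < w → w ≤ 12 →
      c x y ≠ b → c x z ≠ b → c x w ≠ b → c y z ≠ b → c y w ≠ b → False := by
    intro x y z w a1 a2 a3 a4 a5 a6 a7 a8 a9 a10
    refine H (!b) x y z w (by omega) a2 a3 a4 a5 ?_ ?_ ?_ ?_ ?_ <;>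
      simpa [Bool.eq_not] using ‹_›
  by_cases h12 : c s1 s2 = b
  · have r123 := R s1 s2 s3 (by omega) (by omega) (by omega) (by omega) e1 e2 e3
    have r124 := R s1 s2 s4 (by omega) (by omega) (by omega) (by omega) e1 e2 e4
    have r125 := R s1 s2 s5 (by omega) (by omega) (by omega) (by omega) e1 e2 e5
    have r126 := R s1 s2 s6 (by omega) (by omega) (by omega) (by omega) e1 e2 e6
    have r345 := R s3 s4 s5 (by omega) (by omega) (by omega) (by omega) e3 e4 e5
    have r346 := R s3 s4 s6 (by omega) (by omega) (by omega) (by omega) e3 e4 e6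
    have r356 := R s3 s5 s6 (by omega) (by omega) (by omega) (by omega) e3 e5 e6
    have b1345 := B s1 s3 s4 s5 (by omega) (by omega) (by omega) (by omega) (by omega)
    have b1346 := B s1 s3 s4 s6 (by omega) (by omega) (by omega) (by omega) (by omega)
    have b1356 := B s1 s3 s5 s6 (by omega) (by omega) (by omega) (by omega) (by omega)
    clear H R B e1 e2 e3 e4 e5 e6 h0 h1 h2 h3 h4 h5 h6
    grind +splitImp
  · have r134 := R s1 s3 s4 (by omega) (by omega) (by omega) (by omega) e1 e3 e4
    have r135 := R s1 s3 s5 (by omega) (by omega) (by omega) (by omega) e1 e3 e5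
    have r136 := R s1 s3 s6 (by omega) (by omega) (by omega) (by omega) e1 e3 e6
    have r145 := R s1 s4 s5 (by omega) (by omega) (by omega) (by omega) e1 e4 e5
    have r146 := R s1 s4 s6 (by omega) (by omega) (by omega) (by omega) e1 e4 e6
    have r156 := R s1 s5 s6 (by omega) (by omega) (by omega) (by omega) e1 e5 e6
    have r234 := R s2 s3 s4 (by omega) (by omega) (by omega) (by omega) e2 e3 e4
    have r235 := R s2 s3 s5 (by omega) (by omega) (by omega) (by omega) e2 e3 e5
    have r236 := R s2 s3 s6 (by omega) (by omega) (by omega) (by omega) e2 e3 e6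
    have r245 := R s2 s4 s5 (by omega) (by omega) (by omega) (by omega) e2 e4 e5
    have r246 := R s2 s4 s6 (by omega) (by omega) (by omega) (by omega) e2 e4 e6
    have r256 := R s2 s5 s6 (by omega) (by omega) (by omega) (by omega) e2 e5 e6
    have b1234 := B s1 s2 s3 s4 (by omega) (by omega) (by omega) (by omega) (by omega)
    have b1235 := B s1 s2 s3 s5 (by omega) (by omega) (by omega) (by omega) (by omega)
    have b1236 := B s1 s2 s3 s6 (by omega) (by omega) (by omega) (by omega) (by omega)
    have b1245 := B s1 s2 s4 s5 (by omega) (by omega) (by omega) (by omega) (by omega)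
    have b1246 := B s1 s2 s4 s6 (by omega) (by omega) (by omega) (by omega) (by omega)
    have b1256 := B s1 s2 s5 s6 (by omega) (by omega) (by omega) (by omega) (by omega)
    clear H R B e1 e2 e3 e4 e5 e6 h0 h1 h2 h3 h4 h5 h6
    grind +splitImp

theorem upper (c : ℕ → ℕ → Bool)
    (H : ∀ b i j k l, 1 ≤ i → i < j → j < k → k < l → l ≤ 12 →
      c i j = b → c i k = b → c i l = b → c j k = b → c j l = b → False) : False := by
  have key : ∃ b, 6 ≤ ((Finset.Icc 2 12).filter (fun x => c 1 x = b)).card := by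
    by_contra! h
    have ht := h true
    have hf := h false
    have := Finset.card_filter_add_card_filter_not (s := Finset.Icc 2 12) (fun x => c 1 x = true)
    simp only [Bool.not_eq_true, Nat.card_Icc] at this
    omega
  obtain ⟨b, hb⟩ := key
  obtain ⟨S, hS, hc⟩ := Finset.exists_subset_card_eq hb
  let f := S.orderEmbOfFin hc
  have hm : ∀ i, (2 ≤ f i ∧ f i ≤ 12) ∧ c 1 (f i) = b := fun i => by
    have := hS (Finset.orderEmbOfFin_mem S hc i)
    simpa using this
  have hl : ∀ i j, i < j → f i < f j := fun i j h => f.strictMono h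
  exact six_step c b 1 (f 0) (f 1) (f 2) (f 3) (f 4) (f 5) H (by have := (hm 0).1; omega)
    (hl _ _ (by decide)) (hl _ _ (by decide)) (hl _ _ (by decide)) (hl _ _ (by decide))
    (hl _ _ (by decide)) (hm 5).1.2 (hm 0).2 (hm 1).2 (hm 2).2 (hm 3).2 (hm 4).2 (hm 5).2

theorem orderedRamsey_diamond_missing_34_eq :
    (∀ c : ℕ → ℕ → Bool,
      ContainsMonoOrderedCopy 4 12 {(1, 2), (1, 3), (1, 4), (2, 3), (2, 4)} c) ∧
    (∃ c : ℕ → ℕ → Bool,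
      ¬ ContainsMonoOrderedCopy 4 11 {(1, 2), (1, 3), (1, 4), (2, 3), (2, 4)} c) := by
  constructor
  · intro c
    by_contra hno
    apply upper c
    intro b i j k l hi hij hjk hkl hl a1 a2 a3 a4 a5
    apply hno
    refine ⟨b, fun n => if n = 1 then i else if n = 2 then j else if n = 3 then k else l,
      ?_, ?_, ?_⟩
    · intro n h1 h2
      interval_cases n <;> simp <;> omega
    · intro m n h1 h2 h3
      interval_cases n <;> interval_cases m <;> simp <;> omega
    · simp [a1, a2, a3, a4, a5]
  · refine ⟨lowerColoring, ?_⟩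
    rintro ⟨b, φ, hr, hlt, he⟩
    simp only [Finset.mem_insert, Finset.mem_singleton, forall_eq_or_imp, forall_eq] at he
    obtain ⟨a1, a2, a3, a4, a5⟩ := he
    have := (hr 4 (by norm_num) le_rfl).2
    exact lowerColoring_check (φ 4) (by omega) (φ 3) (hlt 3 4 (by norm_num) (by norm_num) le_rfl)
      (φ 2) (hlt 2 3 (by norm_num) (by norm_num) (by norm_num))
      (φ 1) (hlt 1 2 (by norm_num) (by norm_num) (by norm_num)) (hr 1 le_rfl (by norm_num)).1
      ⟨by rw [a1, a2], by rw [a1, a3], by rw [a1, a4], by rw [a1, a5]⟩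
end
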